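/- arXiv:math/0112086 — 5 statements merged into one kernel-verified Lean document; each statement's English description precedes it below -/
import Mathlib

section
/- Let d and r be positive integers and let S be a set of positive integers with S ⊆ {1,…,d}. Suppose that at least one r-tiling sequence with tiles in S exists. Then there is a bijection between K̃(r,S) and the set {k ∈ K_r : s(k) = s̃(r,S) and k_ℓ = k_{ℓ+1} for every ℓ ∈ {1,…,d} with ℓ ∉ S} (with the convention k_{d+1} := 0). -/
open scoped BigOperators

/-- `s(n)`: the number of 1's in the binary expansion of `n`. -/
def binDigitSum (n : ℕ) : ℕ := (Nat.digits 2 n).sum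

/-- An `r`-tiling sequence with tiles in `S`, recorded as a list of pairs `(b_i, ℓ_i)`:
each `ℓ_i ∈ S`, the `b_i` are weakly increasing, `ℓ_i > ℓ_{i+1}` whenever `b_i = b_{i+1}`,
and `∑ ℓ_i·2^{b_i} = r`. -/
def IsTiling (S : Finset ℕ) (r : ℕ) (L : List (ℕ × ℕ)) : Prop :=
  (∀ p ∈ L, p.2 ∈ S) ∧
  L.Chain' (fun p q => p.1 ≤ q.1 ∧ (p.1 = q.1 → q.2 < p.2)) ∧
  (L.map fun p => p.2 * 2 ^ p.1).sum = r

/-- `s̃(r,S)`: the minimal length of an `r`-tiling sequence (`⊤` if none exists). -/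
noncomputable def stilde (S : Finset ℕ) (r : ℕ) : ℕ∞ :=
  sInf {n : ℕ∞ | ∃ L : List (ℕ × ℕ), IsTiling S r L ∧ (L.length : ℕ∞) = n}

/-- `K̃(r,S)`: the set of `r`-tiling sequences of minimal length. -/
def Ktilde (S : Finset ℕ) (r : ℕ) : Set (List (ℕ × ℕ)) :=
  {L | IsTiling S r L ∧ (L.length : ℕ∞) = stilde S r}

/-- `K_r`: weakly decreasing `d`-tuples of nonnegative integers summing to `r`. -/
def Kset (d r : ℕ) : Set (Fin d → ℕ) := {k | Antitone k ∧ ∑ i, k i = r}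

/-- The entry following `k i`, with the convention `k_{d+1} = 0`. -/
def nextEntry {d : ℕ} (k : Fin d → ℕ) (i : Fin d) : ℕ :=
  if h : (i : ℕ) + 1 < d then k ⟨(i : ℕ) + 1, h⟩ else 0

/-- `s(k) = s(k_1−k_2)+s(k_2−k_3)+⋯+s(k_{d−1}−k_d)+s(k_d)`. -/
def sBox {d : ℕ} (k : Fin d → ℕ) : ℕ := ∑ i, binDigitSum (k i - nextEntry k i)

/-!
A tile `(b, ℓ)` is read as the binary digit `2 ^ b` of a number `g ℓ`. A tiling sequence is the
sorted enumeration of a finite set of tiles, so it is the same thing as a family of numbers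
`g 1, …, g d`, which is in turn the family of gaps `k ℓ - k (ℓ + 1)` of a unique weakly decreasing
tuple `k`. Summation by parts gives `∑ k ℓ = ∑ ℓ * g ℓ`, which is the sum of `ℓ * 2 ^ b` over the
tiles, and the number of tiles is the number `∑ s (g ℓ)` of binary digits `1` in the gaps. This
bijection respects the length of every tiling sequence, in particular of the minimal ones.
-/

section SortedList

variable {α : Type*} [LinearOrder α]

/-- The correspondence between strictly increasing lists and finite sets, used to forget the
order in which the tiles of a tiling sequence are listed. -/
def sortedLTEquivFinset : {L : List α // L.SortedLT} ≃ Finset α where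
  toFun L := ⟨L, L.2.nodup⟩
  invFun T := ⟨T.sort, T.sortedLT_sort⟩
  left_inv L := Subtype.ext <|
    (Finset.sortedLT_sort ⟨(L.1 : Multiset α), L.2.nodup⟩).eq_of_mem_iff L.2 fun _ =>
      Finset.mem_sort _
  right_inv T := Finset.ext fun _ => T.mem_sort _

end SortedList

section Fibers

variable {α β ι : Type*} [Fintype ι] [DecidableEq α] [DecidableEq β] (f : ι ↪ β)

/-- The correspondence between a finite set of pairs with second components in the range of `f`
and the family of its fibers over `ι`, used to group tiles by length. -/
noncomputable def fiberEquiv :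
    {T : Finset (α × β) // ∀ p ∈ T, p.2 ∈ Set.range f} ≃ (ι → Finset α) where
  toFun T i := T.1.preimage (·, f i) (Prod.mk_left_injective (f i)).injOn
  invFun F := ⟨Finset.univ.biUnion fun i => F i ×ˢ {f i}, fun p hp => by
    obtain ⟨i, -, hi⟩ := Finset.mem_biUnion.1 hp
    exact ⟨i, (Finset.mem_singleton.1 (Finset.mem_product.1 hi).2).symm⟩⟩
  left_inv := by
    rintro ⟨T, hT⟩
    ext ⟨a, b⟩
    simp only [Finset.mem_biUnion, Finset.mem_univ, true_and, Finset.mem_product,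
      Finset.mem_preimage, Finset.mem_singleton]
    constructor
    · rintro ⟨i, hi, rfl⟩
      exact hi
    · intro hab
      obtain ⟨i, rfl⟩ := hT _ hab
      exact ⟨i, hab, rfl⟩
  right_inv F := by
    ext i a
    simp

theorem mem_fiberEquiv (T : {T : Finset (α × β) // ∀ p ∈ T, p.2 ∈ Set.range f}) (i : ι) (a : α) :
    a ∈ fiberEquiv f T i ↔ (a, f i) ∈ T.1 := by
  simp only [fiberEquiv, Equiv.coe_fn_mk, Finset.mem_preimage]

theorem sum_fiberEquiv {M : Type*} [AddCommMonoid M]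
    (T : {T : Finset (α × β) // ∀ p ∈ T, p.2 ∈ Set.range f}) (w : α × β → M) :
    ∑ i, ∑ a ∈ fiberEquiv f T i, w (a, f i) = ∑ p ∈ T.1, w p := by
  obtain ⟨F, rfl⟩ := (fiberEquiv f).symm.surjective T
  have hdisj : Set.PairwiseDisjoint (Finset.univ : Finset ι) fun i => F i ×ˢ {f i} :=
    fun i _ j _ hij => Finset.disjoint_product.2 (.inr (by simpa using hij))
  calc ∑ i, ∑ a ∈ fiberEquiv f ((fiberEquiv f).symm F) i, w (a, f i)
      = ∑ i, ∑ p ∈ F i ×ˢ {f i}, w p := by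
        simp only [Equiv.apply_symm_apply, Finset.sum_product, Finset.sum_singleton]
    _ = ∑ p ∈ ((fiberEquiv f).symm F).1, w p := (Finset.sum_biUnion hdisj).symm

end Fibers

theorem binDigitSum_eq_length_bitIndices (n : ℕ) : binDigitSum n = n.bitIndices.length := by
  unfold binDigitSum
  induction n using Nat.binaryRec' with
  | zero => simp
  | bit b n hb ih =>
    have hdigits : Nat.digits 2 (Nat.bit b n) = b.toNat :: Nat.digits 2 n := by
      rw [Nat.bit_val, add_comm]
      refine Nat.digits_add 2 one_lt_two _ n b.toNat_lt ?_
      by_cases hn : n = 0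
      · simp [hb hn]
      · exact .inr hn
    rw [hdigits, List.sum_cons, ih]
    cases b <;> simp [add_comm 1]

theorem binDigitSum_eq_card_equivBitIndices (n : ℕ) :
    binDigitSum n = (Finset.equivBitIndices n).card := by
  rw [binDigitSum_eq_length_bitIndices, Finset.equivBitIndices_apply,
    List.toFinset_card_of_nodup Nat.bitIndices_nodup]

section TailSums

variable {d : ℕ}

/-- The tuple of tail sums `g i + g (i + 1) + ⋯`, which recovers a tuple from its gaps. -/
def tailSum (g : Fin d → ℕ) (i : Fin d) : ℕ := ∑ j ∈ Finset.Ici i, g j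

theorem nextEntry_congr {k k' : Fin d → ℕ} {i : Fin d} (h : ∀ j, i < j → k j = k' j) :
    nextEntry k i = nextEntry k' i := by
  unfold nextEntry
  split_ifs with hi
  · exact h _ (Fin.lt_def.2 (Nat.lt_succ_self _))
  · rfl

theorem nextEntry_le_of_antitone {k : Fin d → ℕ} (hk : Antitone k) (i : Fin d) :
    nextEntry k i ≤ k i := by
  unfold nextEntry
  split_ifs with hi
  · exact hk (Fin.le_def.2 (Nat.le_succ _))
  · exact Nat.zero_le _

theorem antitone_tailSum (g : Fin d → ℕ) : Antitone (tailSum g) := fun _ _ hij =>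
  Finset.sum_le_sum_of_subset (Finset.Ici_subset_Ici.2 hij)

theorem nextEntry_tailSum (g : Fin d → ℕ) (i : Fin d) :
    nextEntry (tailSum g) i = ∑ j ∈ Finset.Ioi i, g j := by
  unfold nextEntry tailSum
  split_ifs with hi
  · congr 1
    ext j
    simp only [Finset.mem_Ici, Finset.mem_Ioi, Fin.le_def, Fin.lt_def, Nat.succ_le_iff]
  · have hmax : IsMax i := fun j _ => Fin.le_def.2 (by omega)
    rw [Finset.Ioi_eq_empty.2 hmax, Finset.sum_empty]

theorem tailSum_eq_add_nextEntry (g : Fin d → ℕ) (i : Fin d) :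
    tailSum g i = g i + nextEntry (tailSum g) i := by
  rw [nextEntry_tailSum, Finset.add_sum_Ioi_eq_sum_Ici, tailSum]

theorem eq_tailSum_of_eq_add_nextEntry {g k : Fin d → ℕ}
    (h : ∀ i, k i = g i + nextEntry k i) : k = tailSum g := by
  funext i
  induction i using WellFoundedGT.induction with
  | _ i ih => rw [h, tailSum_eq_add_nextEntry, nextEntry_congr ih]

theorem sum_tailSum (g : Fin d → ℕ) : ∑ i, tailSum g i = ∑ i : Fin d, ((i : ℕ) + 1) * g i := by
  unfold tailSum
  rw [Finset.sum_comm' (t' := Finset.univ) (s' := Finset.Iic) (by simp)]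
  simp only [Finset.sum_const, Fin.card_Iic, smul_eq_mul]

theorem tailSum_mem_Kset_iff {r : ℕ} (g : Fin d → ℕ) :
    tailSum g ∈ Kset d r ↔ ∑ i : Fin d, ((i : ℕ) + 1) * g i = r := by
  rw [← sum_tailSum]
  exact and_iff_right (antitone_tailSum g)

theorem tailSum_eq_nextEntry_iff (g : Fin d → ℕ) (i : Fin d) :
    tailSum g i = nextEntry (tailSum g) i ↔ g i = 0 := by
  rw [tailSum_eq_add_nextEntry, Nat.add_eq_right]

/-- The correspondence between arbitrary tuples and weakly decreasing ones, a tuple being sent to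
its tail sums and a weakly decreasing tuple to its gaps. -/
def tailSumEquiv (d : ℕ) : (Fin d → ℕ) ≃ {k : Fin d → ℕ // Antitone k} where
  toFun g := ⟨tailSum g, antitone_tailSum g⟩
  invFun k i := k.1 i - nextEntry k.1 i
  left_inv g := funext fun i => Nat.sub_eq_of_eq_add (tailSum_eq_add_nextEntry g i)
  right_inv k := Subtype.ext <| Eq.symm <| eq_tailSum_of_eq_add_nextEntry fun i =>
    (Nat.sub_add_cancel (nextEntry_le_of_antitone k.2 i)).symm

theorem sBox_tailSum (g : Fin d → ℕ) : sBox (tailSum g) = ∑ i, binDigitSum (g i) :=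
  Finset.sum_congr rfl fun i _ => congrArg binDigitSum (congrFun ((tailSumEquiv d).left_inv g) i)

end TailSums

/-- The linear order on tiles `(b, ℓ)` in which tiling sequences are listed: by increasing `b`, and
by decreasing `ℓ` for equal `b`. It is not an instance, as `ℕ × ℕ` carries the product order. -/
abbrev tileOrder : LinearOrder (ℕ × ℕ) :=
  LinearOrder.lift' (fun p => toLex (p.1, OrderDual.toDual p.2)) fun p q h => by
    simpa [Prod.ext_iff] using h

theorem isTiling_iff (S : Finset ℕ) (r : ℕ) (L : List (ℕ × ℕ)) :
    IsTiling S r L ↔ @List.SortedLT _ tileOrder.toPreorder L ∧ (∀ p ∈ L, p.2 ∈ S) ∧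
      (L.map fun p => p.2 * 2 ^ p.1).sum = r := by
  have hlt : ∀ p q : ℕ × ℕ, tileOrder.lt p q ↔ p.1 ≤ q.1 ∧ (p.1 = q.1 → q.2 < p.2) :=
    fun p q => Prod.Lex.toLex_lt_toLex'
  simp only [@List.sortedLT_iff_isChain _ _ tileOrder.toPreorder, IsTiling]
  exact ⟨fun h => ⟨h.2.1.imp fun p q => (hlt p q).2, h.1, h.2.2⟩,
    fun h => ⟨h.2.1, h.1.imp fun p q => (hlt p q).1, h.2.2⟩⟩

/-- Tiling sequences correspond to their finite sets of tiles. -/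
def tilingEquivFinset (S : Finset ℕ) (r : ℕ) :
    {L : List (ℕ × ℕ) // IsTiling S r L} ≃
      {T : Finset (ℕ × ℕ) // (∀ p ∈ T, p.2 ∈ S) ∧ ∑ p ∈ T, p.2 * 2 ^ p.1 = r} :=
  (Equiv.subtypeSubtypeEquivSubtype fun h => ((isTiling_iff S r _).1 h).1).symm.trans <|
    (@sortedLTEquivFinset _ tileOrder).subtypeEquiv fun L =>
      (isTiling_iff S r L.1).trans (and_iff_right L.2)

/-- The possible tile lengths `1, …, d`, indexed by `Fin d`. -/
def tileLength (d : ℕ) : Fin d ↪ ℕ := Fin.valEmbedding.trans (addRightEmbedding 1)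

theorem mem_range_tileLength_iff {d ℓ : ℕ} :
    ℓ ∈ Set.range (tileLength d) ↔ ℓ ∈ Finset.Icc 1 d := by
  rw [Finset.mem_Icc, Set.mem_range]
  constructor
  · rintro ⟨i, rfl⟩
    exact ⟨Nat.le_add_left 1 i, i.2⟩
  · rintro ⟨h1, hd⟩
    exact ⟨⟨ℓ - 1, by omega⟩, Nat.sub_add_cancel h1⟩

/-- The correspondence between finite sets `T` of tiles of lengths `1, …, d` and tuples of numbers,
the binary digits of `g i` being the `2 ^ b` with `(b, i + 1) ∈ T`. -/
noncomputable def tileDigitsEquiv (d : ℕ) :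
    {T : Finset (ℕ × ℕ) // ∀ p ∈ T, p.2 ∈ Set.range (tileLength d)} ≃ (Fin d → ℕ) :=
  (fiberEquiv (tileLength d)).trans (Equiv.piCongrRight fun _ => Finset.equivBitIndices.symm)

section TileDigits

variable {d : ℕ} (T : {T : Finset (ℕ × ℕ) // ∀ p ∈ T, p.2 ∈ Set.range (tileLength d)})

theorem tileDigitsEquiv_apply (i : Fin d) :
    tileDigitsEquiv d T i = ∑ b ∈ fiberEquiv (tileLength d) T i, 2 ^ b := rfl

theorem sum_mul_tileDigitsEquiv :
    ∑ i : Fin d, ((i : ℕ) + 1) * tileDigitsEquiv d T i = ∑ p ∈ T.1, p.2 * 2 ^ p.1 := by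
  rw [← sum_fiberEquiv]
  simp only [tileDigitsEquiv_apply, Finset.mul_sum]
  rfl

theorem sum_binDigitSum_tileDigitsEquiv :
    ∑ i, binDigitSum (tileDigitsEquiv d T i) = T.1.card := by
  simp only [Finset.card_eq_sum_ones, ← sum_fiberEquiv, binDigitSum_eq_card_equivBitIndices,
    tileDigitsEquiv, Equiv.trans_apply, Equiv.piCongrRight_apply, Pi.map_apply,
    Equiv.apply_symm_apply]

theorem tileDigitsEquiv_eq_zero_iff (i : Fin d) :
    tileDigitsEquiv d T i = 0 ↔ ∀ b, (b, tileLength d i) ∉ T.1 := by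
  simp [tileDigitsEquiv_apply, mem_fiberEquiv]

theorem forall_mem_iff_tileDigitsEquiv_eq_zero (S : Finset ℕ) :
    (∀ p ∈ T.1, p.2 ∈ S) ↔ ∀ i : Fin d, (i : ℕ) + 1 ∉ S → tileDigitsEquiv d T i = 0 := by
  simp only [tileDigitsEquiv_eq_zero_iff]
  constructor
  · exact fun h i hi b hb => hi (h _ hb)
  · rintro h ⟨b, ℓ⟩ hp
    obtain ⟨i, rfl⟩ := T.2 _ hp
    exact by_contra fun hi => h i hi b hp

end TileDigits

section Correspondence

variable {d r : ℕ} {S : Finset ℕ}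

/-- Sets of tiles with lengths in `S` and total weight `r` correspond to tuples supported on `S`
with weighted sum `r`. -/
noncomputable def finsetEquivDigits (hS : S ⊆ Finset.Icc 1 d) :
    {T : Finset (ℕ × ℕ) // (∀ p ∈ T, p.2 ∈ S) ∧ ∑ p ∈ T, p.2 * 2 ^ p.1 = r} ≃
      {g : Fin d → ℕ // (∀ i : Fin d, (i : ℕ) + 1 ∉ S → g i = 0) ∧
        ∑ i : Fin d, ((i : ℕ) + 1) * g i = r} :=
  (Equiv.subtypeSubtypeEquivSubtype fun h p hp =>
    mem_range_tileLength_iff.2 (hS (h.1 p hp))).symm.trans <|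
    (tileDigitsEquiv d).subtypeEquiv fun T => by
      rw [forall_mem_iff_tileDigitsEquiv_eq_zero, sum_mul_tileDigitsEquiv]

/-- Tuples supported on `S` with weighted sum `r` correspond to the members of `K_r` whose
consecutive entries agree off `S`. -/
def digitsEquivKset :
    {g : Fin d → ℕ // (∀ i : Fin d, (i : ℕ) + 1 ∉ S → g i = 0) ∧
        ∑ i : Fin d, ((i : ℕ) + 1) * g i = r} ≃
      {k : Fin d → ℕ // k ∈ Kset d r ∧ ∀ i : Fin d, (i : ℕ) + 1 ∉ S → k i = nextEntry k i} :=
  ((tailSumEquiv d).subtypeEquiv fun g => by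
    change _ ↔ tailSum g ∈ Kset d r ∧
      ∀ i : Fin d, (i : ℕ) + 1 ∉ S → tailSum g i = nextEntry (tailSum g) i
    simp only [tailSum_mem_Kset_iff, tailSum_eq_nextEntry_iff, and_comm]).trans <|
    Equiv.subtypeSubtypeEquivSubtype fun h => h.1.1

/-- The bijection behind the theorem: the tuple attached to a tiling sequence has `ℓ`-th entry
`∑ 2 ^ b` over the tiles `(b, m)` with `m ≥ ℓ`. -/
noncomputable def tilingEquivKset (hS : S ⊆ Finset.Icc 1 d) :
    {L : List (ℕ × ℕ) // IsTiling S r L} ≃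
      {k : Fin d → ℕ // k ∈ Kset d r ∧ ∀ i : Fin d, (i : ℕ) + 1 ∉ S → k i = nextEntry k i} :=
  (tilingEquivFinset S r).trans ((finsetEquivDigits hS).trans digitsEquivKset)

theorem sBox_tilingEquivKset (hS : S ⊆ Finset.Icc 1 d)
    (L : {L : List (ℕ × ℕ) // IsTiling S r L}) :
    sBox (tilingEquivKset hS L).1 = L.1.length :=
  (sBox_tailSum _).trans (sum_binDigitSum_tileDigitsEquiv _)

end Correspondence

theorem stmt0_general (d r : ℕ) (S : Finset ℕ) (hS : S ⊆ Finset.Icc 1 d) (c : ℕ∞) :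
    Nonempty ({L : List (ℕ × ℕ) | IsTiling S r L ∧ (L.length : ℕ∞) = c} ≃
      {k : Fin d → ℕ | k ∈ Kset d r ∧ ((sBox k : ℕ) : ℕ∞) = c ∧
        ∀ i : Fin d, ((i : ℕ) + 1) ∉ S → k i = nextEntry k i}) := by
  let e := tilingEquivKset (r := r) hS
  have hlength (L) : (IsTiling S r L.1 ∧ (L.1.length : ℕ∞) = c) ↔
      (e L).1 ∈ Kset d r ∧ (sBox (e L).1 : ℕ∞) = c ∧
        ∀ i : Fin d, (i : ℕ) + 1 ∉ S → (e L).1 i = nextEntry (e L).1 i := by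
    rw [sBox_tilingEquivKset, and_iff_right L.2, and_iff_right (e L).2.1, and_iff_left (e L).2.2]
  exact ⟨(Equiv.subtypeSubtypeEquivSubtype fun h => h.1).symm.trans <|
    (e.subtypeEquiv hlength).trans <| Equiv.subtypeSubtypeEquivSubtype fun h => ⟨h.1, h.2.2⟩⟩

theorem stmt0 (d r : ℕ) (hd : 0 < d) (hr : 0 < r) (S : Finset ℕ)
    (hS : S ⊆ Finset.Icc 1 d)
    (hex : ∃ L : List (ℕ × ℕ), IsTiling S r L) :
    Nonempty (Ktilde S r ≃
      {k : Fin d → ℕ | k ∈ Kset d r ∧ ((sBox k : ℕ) : ℕ∞) = stilde S r ∧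
        ∀ i : Fin d, ((i : ℕ) + 1) ∉ S → k i = nextEntry k i}) :=
  stmt0_general d r S hS (stilde S r)
end

section
/- Let S be a finite set of positive integers and let r be a positive integer. Suppose r = Σ_{i=1}^{ν} ℓ_i·2^{b_i} for some ℓ_1,…,ℓ_ν ∈ S and nonnegative integers b_1,…,b_ν, with no ordering or distinctness conditions imposed on the pairs (b_i,ℓ_i). Then there exists an r-tiling sequence with tiles in S of length at most ν; in particular s̃(r,S) ≤ ν, and consequently s̃(r_1+r_2,S) ≤ s̃(r_1,S)+s̃(r_2,S) for all positive integers r_1, r_2. -/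
open scoped BigOperators

/-!
Two equal tiles `(b, ℓ)` cover the same total as the single tile `(b + 1, ℓ)`, which uses the same
element of `S`. Trading pairs of equal tiles in this way shortens the collection, so it stops; the
tiles are then pairwise distinct, and sorting them yields a tiling sequence. Subadditivity of `s̃`
follows by concatenating two tiling sequences and normalizing the result.
-/

section Doubling

variable {α M : Type*} [AddCommMonoid M]

theorem exists_finset_sum_eq_card_le_of_doubling {f : α → M} {d : α → α} {P : α → Prop}
    (hf : ∀ a, f (d a) = f a + f a) (hd : ∀ a, P a → P (d a)) (s : Multiset α)
    (hs : ∀ a ∈ s, P a) :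
    ∃ t : Finset α, (∀ a ∈ t, P a) ∧ ∑ a ∈ t, f a = (s.map f).sum ∧ t.card ≤ s.card := by
  induction hn : s.card using Nat.strong_induction_on generalizing s with
  | _ n ih =>
    subst hn
    by_cases hnodup : s.Nodup
    · exact ⟨⟨s, hnodup⟩, hs, rfl, le_rfl⟩
    · obtain ⟨a, u, rfl⟩ : ∃ a u, s = a ::ₘ a ::ₘ u := by
        simpa only [Multiset.nodup_iff_ne_cons_cons, not_forall, not_not] using hnodup
      simp only [Multiset.forall_mem_cons] at hs
      have hlt : (d a ::ₘ u).card < (a ::ₘ a ::ₘ u).card := by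
        simp only [Multiset.card_cons, Nat.lt_succ_self]
      obtain ⟨t, htP, htsum, htcard⟩ :=
        ih _ hlt (d a ::ₘ u) (Multiset.forall_mem_cons.2 ⟨hd a hs.1, hs.2.2⟩) rfl
      refine ⟨t, htP, ?_, htcard.trans hlt.le⟩
      simp only [htsum, Multiset.map_cons, Multiset.sum_cons, hf, add_assoc]

end Doubling

section Tiling

variable {S : Finset ℕ}

theorem isTiling_sort (t : Finset (ℕ × ℕ)) (ht : ∀ p ∈ t, p.2 ∈ S) :
    IsTiling S (∑ p ∈ t, p.2 * 2 ^ p.1) (t.sort (Prod.Lex (· < ·) (· ≥ ·))) := by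
  refine ⟨fun p hp => ht p ((Finset.mem_sort _).1 hp), List.Pairwise.isChain ?_, ?_⟩
  · refine ((t.pairwise_sort _).and (t.sort_nodup _)).imp ?_
    rintro ⟨b, ℓ⟩ ⟨b', ℓ'⟩ ⟨hle, hne⟩
    simp only [Prod.lex_def, ne_eq, Prod.mk.injEq] at hle hne ⊢
    omega
  · rw [← Multiset.sum_coe, ← Multiset.map_coe, Finset.sort_eq, Finset.sum_eq_multiset_sum]

theorem exists_isTiling_length_le_card (s : Multiset (ℕ × ℕ)) (hs : ∀ p ∈ s, p.2 ∈ S) :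
    ∃ L : List (ℕ × ℕ), IsTiling S (s.map fun p => p.2 * 2 ^ p.1).sum L ∧ L.length ≤ s.card := by
  have hdouble (p : ℕ × ℕ) : p.2 * 2 ^ (p.1 + 1) = p.2 * 2 ^ p.1 + p.2 * 2 ^ p.1 := by ring
  obtain ⟨t, htS, htsum, htcard⟩ :=
    exists_finset_sum_eq_card_le_of_doubling (f := fun p : ℕ × ℕ => p.2 * 2 ^ p.1)
      (d := fun p => (p.1 + 1, p.2)) (P := fun p => p.2 ∈ S) hdouble (fun _ hp => hp) s hs
  exact ⟨_, htsum ▸ isTiling_sort t htS, (t.length_sort _).trans_le htcard⟩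

theorem exists_isTiling_sum_length_le_card {ι : Type*} (I : Finset ι) (ℓ b : ι → ℕ)
    (hℓ : ∀ i ∈ I, ℓ i ∈ S) :
    ∃ L : List (ℕ × ℕ), IsTiling S (∑ i ∈ I, ℓ i * 2 ^ b i) L ∧ L.length ≤ I.card := by
  simpa only [Multiset.map_map, Function.comp_def, Multiset.card_map, Finset.sum_map_val,
    Finset.card_val] using
    exists_isTiling_length_le_card (I.val.map fun i => (b i, ℓ i))
      (Multiset.forall_mem_map_iff.2 hℓ)

theorem IsTiling.exists_add {r₁ r₂ : ℕ} {L₁ L₂ : List (ℕ × ℕ)} (hL₁ : IsTiling S r₁ L₁)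
    (hL₂ : IsTiling S r₂ L₂) :
    ∃ L : List (ℕ × ℕ), IsTiling S (r₁ + r₂) L ∧ L.length ≤ L₁.length + L₂.length := by
  obtain ⟨hS₁, -, rfl⟩ := hL₁
  obtain ⟨hS₂, -, rfl⟩ := hL₂
  simpa only [Multiset.map_coe, Multiset.sum_coe, Multiset.coe_card, List.map_append,
    List.sum_append, List.length_append] using
    exists_isTiling_length_le_card ↑(L₁ ++ L₂) (List.forall_mem_append.2 ⟨hS₁, hS₂⟩)

theorem IsTiling.stilde_le_length {r : ℕ} {L : List (ℕ × ℕ)} (hL : IsTiling S r L) :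
    stilde S r ≤ L.length :=
  sInf_le ⟨L, hL, rfl⟩

theorem stilde_eq_iInf (S : Finset ℕ) (r : ℕ) :
    stilde S r = ⨅ L : {L : List (ℕ × ℕ) // IsTiling S r L}, (L.1.length : ℕ∞) := by
  simp only [stilde, iInf, Set.range, Subtype.exists, exists_prop]

theorem stilde_add_le (S : Finset ℕ) (r₁ r₂ : ℕ) :
    stilde S (r₁ + r₂) ≤ stilde S r₁ + stilde S r₂ := by
  simp only [stilde_eq_iInf S r₁, stilde_eq_iInf S r₂, ENat.iInf_add, ENat.add_iInf]
  refine le_iInf₂ fun ⟨L₂, hL₂⟩ ⟨L₁, hL₁⟩ => ?_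
  obtain ⟨L, hL, hlen⟩ := hL₁.exists_add hL₂
  exact hL.stilde_le_length.trans (by exact_mod_cast hlen)

end Tiling

theorem stmt3 (S : Finset ℕ) (hpos : ∀ ℓ ∈ S, 0 < ℓ) (r : ℕ) (hr : 0 < r)
    (ν : ℕ) (ℓ b : Fin ν → ℕ) (hℓ : ∀ i, ℓ i ∈ S)
    (hsum : ∑ i, ℓ i * 2 ^ b i = r) :
    (∃ L : List (ℕ × ℕ), IsTiling S r L ∧ L.length ≤ ν) ∧
    stilde S r ≤ (ν : ℕ∞) ∧
    (∀ r₁ r₂ : ℕ, 0 < r₁ → 0 < r₂ →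
      stilde S (r₁ + r₂) ≤ stilde S r₁ + stilde S r₂) := by
  obtain ⟨L, hL, hlen⟩ := exists_isTiling_sum_length_le_card Finset.univ ℓ b fun i _ => hℓ i
  rw [hsum] at hL
  rw [Finset.card_fin] at hlen
  exact ⟨⟨L, hL, hlen⟩, hL.stilde_le_length.trans (mod_cast hlen),
    fun r₁ r₂ _ _ => stilde_add_le S r₁ r₂⟩
end

section
/- Let S be a finite set of positive integers, and let ν and j be positive integers. Define T̃(ν,j,S) to be the set of all finite sequences of integer pairs (b_1,ℓ_1),…,(b_ν,ℓ_ν) such that ℓ_i ∈ S and 0 ≤ b_i ≤ b_{i+1} for all i, ℓ_i > ℓ_{i+1} whenever b_i = b_{i+1}, and Σ_{i=1}^{ν} ℓ_i·2^{b_i} ≡ −j (mod 2^{b_ν}). Then T̃(ν,j,S) is a finite set. -/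
open scoped BigOperators

/-!
Take a sequence `(b₁, ℓ₁), …` with `b₁ ≤ b₂ ≤ …` and `∑ ℓ_i m ^ b_i ≡ -j` modulo its largest power
of `m`. Every term, and the modulus, is divisible by `m ^ b₁`, hence so is `j`; as `j ≠ 0`, only
finitely many first pairs are possible. Once the first pair is fixed, the remaining pairs solve the
same problem with `j` replaced by `j + ℓ₁ m ^ b₁`, which is again positive, so induction on the
length applies.
-/

/-- A tiling sequence of `-j` modulo its largest power of the base `m`, with tiles in `S`: for
`m = 2` this is the membership condition of `T̃(ν, j, S)`, except that the length is left free and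
tiles with equal exponents `b_i` may come in any order and repeat. The congruence is void for the
empty sequence. -/
structure IsModularTiling (m : ℤ) (S : Set ℕ) (j : ℤ) (L : List (ℕ × ℕ)) : Prop where
  tile_mem : ∀ p ∈ L, p.2 ∈ S
  sortedLE : (L.map Prod.fst).SortedLE
  modEq : ∀ p ∈ L.getLast?, (L.map fun q => (q.2 * m ^ q.1 : ℤ)).sum ≡ -j [ZMOD m ^ p.1]

theorem pow_dvd_sum_map_mul_pow {R : Type*} [CommSemiring R] (m : R) {b : ℕ} {L : List (ℕ × ℕ)}
    (h : ∀ q ∈ L, b ≤ q.1) : m ^ b ∣ (L.map fun q => (q.2 * m ^ q.1 : R)).sum :=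
  List.dvd_sum <| List.forall_mem_map.2 fun q hq => (pow_dvd_pow m (h q hq)).mul_left _

namespace IsModularTiling

variable {m j : ℤ} {S : Set ℕ} {p : ℕ × ℕ} {L : List (ℕ × ℕ)}

theorem fst_le_of_mem_cons (h : IsModularTiling m S j (p :: L)) : ∀ q ∈ p :: L, p.1 ≤ q.1 := by
  have hle : ∀ b ∈ L.map Prod.fst, p.1 ≤ b := (List.pairwise_cons.1 h.sortedLE.pairwise).1
  exact List.forall_mem_cons.2 ⟨le_rfl, List.forall_mem_map.1 hle⟩

theorem pow_fst_dvd (h : IsModularTiling m S j (p :: L)) : m ^ p.1 ∣ j := by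
  have hne : p :: L ≠ [] := List.cons_ne_nil p L
  have hlast : p.1 ≤ ((p :: L).getLast hne).1 := h.fst_le_of_mem_cons _ (List.getLast_mem hne)
  have hmod := (h.modEq _ (List.getLast_mem_getLast? hne)).of_dvd (pow_dvd_pow m hlast)
  exact dvd_neg.1 (hmod.dvd_iff.1 (pow_dvd_sum_map_mul_pow m h.fst_le_of_mem_cons))

theorem tail (h : IsModularTiling m S j (p :: L)) :
    IsModularTiling m S (j + p.2 * m ^ p.1) L where
  tile_mem q hq := h.tile_mem q (List.mem_cons_of_mem p hq)
  sortedLE := (List.pairwise_cons.1 h.sortedLE.pairwise).2.sortedLE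
  modEq q hq := by
    have hmod := h.modEq q (List.mem_getLast?_cons hq)
    rw [List.map_cons, List.sum_cons] at hmod
    convert hmod.sub_right (p.2 * m ^ p.1) using 1 <;> ring

end IsModularTiling

theorem stmt4_general {m : ℤ} (hm : 1 < m) {S : Set ℕ} (hS : S.Finite) (ν : ℕ) {j : ℤ}
    (hj : 0 < j) : {L : List (ℕ × ℕ) | L.length = ν ∧ IsModularTiling m S j L}.Finite := by
  induction ν generalizing j with
  | zero => exact (Set.finite_singleton []).subset fun L hL => List.length_eq_zero_iff.1 hL.1
  | succ ν ih =>
    have hmult : FiniteMultiplicity m j := Int.finiteMultiplicity_iff.2 ⟨by omega, hj.ne'⟩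
    have hheads : (Set.Iic (multiplicity m j) ×ˢ S).Finite := (Set.finite_Iic _).prod hS
    refine (hheads.biUnion fun p _ =>
      (ih (j := j + p.2 * m ^ p.1) (by positivity)).image (List.cons p)).subset ?_
    rintro (_ | ⟨p, L⟩) ⟨hlen, hL⟩
    · cases hlen
    · have hp : p ∈ Set.Iic (multiplicity m j) ×ˢ S :=
        ⟨hmult.le_multiplicity_of_pow_dvd hL.pow_fst_dvd, hL.tile_mem p List.mem_cons_self⟩
      exact Set.mem_biUnion hp ⟨L, ⟨Nat.succ.inj hlen, hL.tail⟩, rfl⟩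

theorem stmt4 (S : Finset ℕ) (hpos : ∀ ℓ ∈ S, 0 < ℓ) (ν j : ℕ)
    (hν : 0 < ν) (hj : 0 < j) :
    {L : List (ℕ × ℕ) | L.length = ν ∧ (∀ p ∈ L, p.2 ∈ S) ∧
      L.Chain' (fun p q => p.1 ≤ q.1 ∧ (p.1 = q.1 → q.2 < p.2)) ∧
      ∀ p : ℕ × ℕ, L.getLast? = some p →
        ((L.map fun q => (q.2 * 2 ^ q.1 : ℤ)).sum ≡ -(j : ℤ) [ZMOD (2 ^ p.1 : ℤ)])}.Finite :=
  (stmt4_general one_lt_two S.finite_toSet ν (Int.natCast_pos.2 hj)).subset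
    fun _ ⟨hlen, hmem, hchain, hmod⟩ =>
      ⟨hlen, hmem, (List.isChain_map_of_isChain _ (fun _ _ h => h.1) hchain).sortedLE, hmod⟩
end

section
/- Let S = {1,3,9,11} and r = 2^{17}−4. Then s̃(r,S) = 6 and the unique r-tiling sequence with tiles in S of length 6 is (2,9),(3,11),(7,9),(8,11),(12,9),(13,11); that is, 2^{17}−4 = 11·2^{13}+9·2^{12}+11·2^{8}+9·2^{7}+11·2^{3}+9·2^{2} and K̃(r,S) consists of exactly this one sequence. -/
open scoped BigOperators

/-!
Process the positions `i = 0, 1, 2, …` in turn, and let `Aᵢ` be the set of tiles at position `i`. If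
`r = 2 ^ n - c`, the tiles at positions `≥ i` add up to `2 ^ i * (2 ^ (n - i) - cᵢ)`, where `c₀ = c`
and `2 * cᵢ₊₁ = cᵢ + ∑ Aᵢ`; eventually `cₙ = 1`. So a tiling is a walk from `c` to `1` in a graph of
*deficits*, and its length is the cost of that walk. As in linear programming duality, a potential
`Φ` with `2 + Φ cᵢ₊₁ ≤ 5 * #Aᵢ + Φ cᵢ` on every edge telescopes to the lower bound
`2 * n + Φ 1 ≤ 5 * length + Φ c`. For the tiles `1, 3, 9, 11` such a `Φ` exists, and from the
deficits occurring for `r = 2 ^ j * (2 ^ (5 * k) - 1)` only one edge is tight, leading through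
`2 ^ j → ⋯ → 2 → 1` and then around the cycle `1 → 5 → 8 → 4 → 2 → 1`, which uses the tiles `9` and
`11`.
-/

section TilingSequences

variable {S : Finset ℕ} {r n : ℕ} {L L' : List (ℕ × ℕ)}

/-- The order in which the pairs `(b, ℓ)` of a tiling sequence are listed: `b` increases, and `ℓ`
decreases among pairs with the same `b`. -/
def TilingOrder (p q : ℕ × ℕ) : Prop :=
  p.1 ≤ q.1 ∧ (p.1 = q.1 → q.2 < p.2)

instance : IsTrans (ℕ × ℕ) TilingOrder :=
  ⟨fun p q s hpq hqs => by unfold TilingOrder at *; omega⟩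

instance : Std.Asymm TilingOrder :=
  ⟨fun p q hpq hqp => by unfold TilingOrder at *; omega⟩

/-- The set of tiles `ℓ` which the sequence `L` places at position `b`. -/
def tilesAt (L : List (ℕ × ℕ)) (b : ℕ) : Finset ℕ :=
  {p ∈ L.toFinset | p.1 = b}.image Prod.snd

theorem mem_tilesAt {b l : ℕ} : l ∈ tilesAt L b ↔ (b, l) ∈ L := by
  simp [tilesAt]

theorem sum_map_eq_sum_tilesAt (hL : L.Nodup) (hn : ∀ p ∈ L, p.1 < n) (f : ℕ × ℕ → ℕ) :
    (L.map f).sum = ∑ i ∈ Finset.range n, ∑ l ∈ tilesAt L i, f (i, l) := by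
  rw [← List.sum_toFinset f hL]
  refine Finset.sum_finset_product _ _ _ fun p => ?_
  rw [List.mem_toFinset, Finset.mem_range, mem_tilesAt]
  exact ⟨fun hp => ⟨hn p hp, hp⟩, And.right⟩

namespace IsTiling

theorem pairwise (h : IsTiling S r L) : L.Pairwise TilingOrder :=
  List.isChain_iff_pairwise.1 h.2.1

theorem nodup (h : IsTiling S r L) : L.Nodup :=
  h.pairwise.nodup

theorem tilesAt_subset (h : IsTiling S r L) (b : ℕ) : tilesAt L b ⊆ S :=
  fun _ hl => h.1 _ (mem_tilesAt.1 hl)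

theorem fst_lt (h : IsTiling S r L) (hS : 0 ∉ S) (hr : r < 2 ^ n) : ∀ p ∈ L, p.1 < n := by
  intro p hp
  have hpos : 0 < p.2 := Nat.pos_of_ne_zero fun h0 => hS (h0 ▸ h.1 p hp)
  have hle : p.2 * 2 ^ p.1 ≤ r :=
    h.2.2 ▸ List.le_sum_of_mem (List.mem_map_of_mem (f := fun p => p.2 * 2 ^ p.1) hp)
  exact (Nat.pow_lt_pow_iff_right one_lt_two).1 <|
    (Nat.le_mul_of_pos_left _ hpos).trans_lt (hle.trans_lt hr)

theorem sum_sum_tilesAt (h : IsTiling S r L) (hS : 0 ∉ S) (hr : r < 2 ^ n) :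
    ∑ i ∈ Finset.range n, (∑ l ∈ tilesAt L i, l) * 2 ^ i = r := by
  rw [← h.2.2, sum_map_eq_sum_tilesAt h.nodup (h.fst_lt hS hr)]
  simp only [Finset.sum_mul]

theorem sum_card_tilesAt (h : IsTiling S r L) (hS : 0 ∉ S) (hr : r < 2 ^ n) :
    ∑ i ∈ Finset.range n, (tilesAt L i).card = L.length := by
  simpa using (sum_map_eq_sum_tilesAt h.nodup (h.fst_lt hS hr) fun _ => 1).symm

theorem eq_of_tilesAt_eq (h : IsTiling S r L) (h' : IsTiling S r L') (hS : 0 ∉ S)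
    (hr : r < 2 ^ n) (heq : ∀ i < n, tilesAt L i = tilesAt L' i) : L = L' := by
  refine h.pairwise.eq_of_mem_iff h'.pairwise fun {p} => ⟨fun hp => ?_, fun hp => ?_⟩
  · rwa [← Prod.mk.eta (p := p), ← mem_tilesAt, ← heq _ (h.fst_lt hS hr p hp), mem_tilesAt]
  · rwa [← Prod.mk.eta (p := p), ← mem_tilesAt, heq _ (h'.fst_lt hS hr p hp), mem_tilesAt]

theorem stilde_eq (h : IsTiling S r L) (hmin : ∀ L', IsTiling S r L' → L.length ≤ L'.length) :
    stilde S r = L.length := by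
  refine le_antisymm (sInf_le ⟨L, h, rfl⟩) (le_sInf ?_)
  rintro _ ⟨L', hL', rfl⟩
  exact_mod_cast hmin L' hL'

theorem Ktilde_eq_singleton (h : IsTiling S r L) (hlen : stilde S r = L.length)
    (huniq : ∀ L', IsTiling S r L' → L'.length = L.length → L' = L) : Ktilde S r = {L} := by
  refine Set.eq_singleton_iff_unique_mem.2 ⟨⟨h, hlen.symm⟩, fun L' hL' => huniq L' hL'.1 ?_⟩
  exact_mod_cast hL'.2.trans hlen

end IsTiling

end TilingSequences

section Potentials

variable {S : Finset ℕ} {price gain : ℕ} {Φ : ℕ → ℕ} {D : Set ℕ}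

/-- `Φ` is a potential on the graph of deficits of `S`, whose edges `c → c'` are given by the sets
`A` of tiles with `c + ∑ A = 2 * c'`: the gain of moving to the next position, together with the
increase of `Φ`, is at most the price of the tiles in `A`. -/
def IsPotential (S : Finset ℕ) (price gain : ℕ) (Φ : ℕ → ℕ) : Prop :=
  ∀ c c' : ℕ, 0 < c → ∀ A ⊆ S, c + ∑ l ∈ A, l = 2 * c' → gain + Φ c' ≤ price * A.card + Φ c

/-- From each deficit in `D` at most one edge satisfies the inequality of `IsPotential` with
equality, and this tight edge stays in `D`. -/
def IsRigidOn (S : Finset ℕ) (price gain : ℕ) (Φ : ℕ → ℕ) (D : Set ℕ) : Prop :=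
  ∀ c ∈ D, ∃ B : Finset ℕ, ∀ A ⊆ S, ∀ c', c + ∑ l ∈ A, l = 2 * c' →
    price * A.card + Φ c = gain + Φ c' → A = B ∧ c' ∈ D

theorem exists_next_deficit {n c : ℕ} {A : ℕ → Finset ℕ} (hc : 0 < c)
    (h : c + ∑ i ∈ Finset.range (n + 1), (∑ l ∈ A i, l) * 2 ^ i = 2 ^ (n + 1)) :
    ∃ c', 0 < c' ∧ c + ∑ l ∈ A 0, l = 2 * c' ∧
      c' + ∑ i ∈ Finset.range n, (∑ l ∈ A (i + 1), l) * 2 ^ i = 2 ^ n := by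
  have hshift : ∑ i ∈ Finset.range n, (∑ l ∈ A (i + 1), l) * 2 ^ (i + 1) =
      2 * ∑ i ∈ Finset.range n, (∑ l ∈ A (i + 1), l) * 2 ^ i := by
    rw [Finset.mul_sum]
    exact Finset.sum_congr rfl fun i _ => by ring
  rw [Finset.sum_range_succ', hshift, pow_zero, mul_one, pow_succ] at h
  exact ⟨2 ^ n - ∑ i ∈ Finset.range n, (∑ l ∈ A (i + 1), l) * 2 ^ i, by omega, by omega, by omega⟩

namespace IsPotential

theorem gain_mul_add_le (hΦ : IsPotential S price gain Φ) {n c : ℕ} {A : ℕ → Finset ℕ}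
    (hc : 0 < c) (hA : ∀ i, A i ⊆ S)
    (h : c + ∑ i ∈ Finset.range n, (∑ l ∈ A i, l) * 2 ^ i = 2 ^ n) :
    gain * n + Φ 1 ≤ price * ∑ i ∈ Finset.range n, (A i).card + Φ c := by
  induction n generalizing c A with
  | zero =>
    obtain rfl : c = 1 := by simpa using h
    simp
  | succ n ih =>
    obtain ⟨c', hc', hstep, hrest⟩ := exists_next_deficit hc h
    have hhead := hΦ c c' hc (A 0) (hA 0) hstep
    have htail := ih hc' (fun i => hA (i + 1)) hrest
    rw [Finset.sum_range_succ', mul_add, mul_add, mul_one]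
    omega

theorem exists_tight_next_deficit (hΦ : IsPotential S price gain Φ) {n c : ℕ} {A : ℕ → Finset ℕ}
    (hc : 0 < c) (hA : ∀ i, A i ⊆ S)
    (h : c + ∑ i ∈ Finset.range (n + 1), (∑ l ∈ A i, l) * 2 ^ i = 2 ^ (n + 1))
    (htight : price * ∑ i ∈ Finset.range (n + 1), (A i).card + Φ c = gain * (n + 1) + Φ 1) :
    ∃ c', 0 < c' ∧ c + ∑ l ∈ A 0, l = 2 * c' ∧ price * (A 0).card + Φ c = gain + Φ c' ∧
      c' + ∑ i ∈ Finset.range n, (∑ l ∈ A (i + 1), l) * 2 ^ i = 2 ^ n ∧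
      price * ∑ i ∈ Finset.range n, (A (i + 1)).card + Φ c' = gain * n + Φ 1 := by
  obtain ⟨c', hc', hstep, hrest⟩ := exists_next_deficit hc h
  have hhead := hΦ c c' hc (A 0) (hA 0) hstep
  have htail := hΦ.gain_mul_add_le hc' (fun i => hA (i + 1)) hrest
  rw [Finset.sum_range_succ', mul_add, mul_add, mul_one] at htight
  exact ⟨c', hc', hstep, by omega, hrest, by omega⟩

theorem eq_of_tight (hΦ : IsPotential S price gain Φ) (hD : IsRigidOn S price gain Φ D)
    {n c : ℕ} {A A' : ℕ → Finset ℕ} (hc : 0 < c) (hcD : c ∈ D)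
    (hA : ∀ i, A i ⊆ S) (hA' : ∀ i, A' i ⊆ S)
    (h : c + ∑ i ∈ Finset.range n, (∑ l ∈ A i, l) * 2 ^ i = 2 ^ n)
    (h' : c + ∑ i ∈ Finset.range n, (∑ l ∈ A' i, l) * 2 ^ i = 2 ^ n)
    (htight : price * ∑ i ∈ Finset.range n, (A i).card + Φ c = gain * n + Φ 1)
    (htight' : price * ∑ i ∈ Finset.range n, (A' i).card + Φ c = gain * n + Φ 1) :
    ∀ i < n, A i = A' i := by
  induction n generalizing c A A' with
  | zero => simp
  | succ n ih =>
    obtain ⟨d, hd, hstep, hhead, hrest, htail⟩ :=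
      hΦ.exists_tight_next_deficit hc hA h htight
    obtain ⟨d', -, hstep', hhead', hrest', htail'⟩ :=
      hΦ.exists_tight_next_deficit hc hA' h' htight'
    obtain ⟨B, hB⟩ := hD c hcD
    obtain ⟨hAB, hdD⟩ := hB _ (hA 0) d hstep hhead
    obtain ⟨hAB', -⟩ := hB _ (hA' 0) d' hstep' hhead'
    have hzero : A 0 = A' 0 := hAB.trans hAB'.symm
    obtain rfl : d = d' := by
      rw [hzero] at hstep
      omega
    rintro (_ | i) hi
    · exact hzero
    · exact ih hd hdD (fun i => hA (i + 1)) (fun i => hA' (i + 1)) hrest hrest' htail htail' i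
        (by omega)

variable {r n c : ℕ} {L L' : List (ℕ × ℕ)}

theorem gain_mul_add_le_length (hΦ : IsPotential S price gain Φ) (hS : 0 ∉ S) (hc : 0 < c)
    (hr : c + r = 2 ^ n) (hL : IsTiling S r L) :
    gain * n + Φ 1 ≤ price * L.length + Φ c := by
  have hrn : r < 2 ^ n := by omega
  rw [← hL.sum_card_tilesAt hS hrn]
  exact hΦ.gain_mul_add_le hc hL.tilesAt_subset (by rw [hL.sum_sum_tilesAt hS hrn, hr])

theorem eq_of_length_tight (hΦ : IsPotential S price gain Φ) (hD : IsRigidOn S price gain Φ D)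
    (hS : 0 ∉ S) (hc : 0 < c) (hcD : c ∈ D) (hr : c + r = 2 ^ n)
    (hL : IsTiling S r L) (hL' : IsTiling S r L') (hlen : L.length = L'.length)
    (htight : price * L'.length + Φ c = gain * n + Φ 1) : L = L' := by
  have hrn : r < 2 ^ n := by omega
  refine hL.eq_of_tilesAt_eq hL' hS hrn <|
    hΦ.eq_of_tight hD hc hcD hL.tilesAt_subset hL'.tilesAt_subset ?_ ?_ ?_ ?_
  · rw [hL.sum_sum_tilesAt hS hrn, hr]
  · rw [hL'.sum_sum_tilesAt hS hrn, hr]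
  · rw [hL.sum_card_tilesAt hS hrn, hlen, htight]
  · rw [hL'.sum_card_tilesAt hS hrn, htight]

end IsPotential

end Potentials

section PeriodicTiling

/-- The potential for the tiles `1, 3, 9, 11`, price `5` and gain `2`. For `0 < c < 9` it is the
maximum of `2 * (number of edges) - 5 * (number of tiles)` over the walks from `c` to `1`; for
larger `c` that maximum is irregular, and an upper bound is enough. -/
def tilePotential : ℕ → ℕ
  | 3 => 0
  | 5 => 3
  | 6 => 2
  | 7 => 3
  | c => 2 * Nat.log 2 c

theorem tilePotential_of_le {c : ℕ} (hc : 8 ≤ c) : tilePotential c = 2 * Nat.log 2 c := by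
  unfold tilePotential
  split <;> first | rfl | omega

theorem tilePotential_two_pow (j : ℕ) : tilePotential (2 ^ j) = 2 * j := by
  rcases lt_or_ge j 3 with hj | hj
  · interval_cases j <;> rfl
  · rw [tilePotential_of_le (Nat.pow_le_pow_right two_pos hj), Nat.log_pow one_lt_two]

theorem two_add_tilePotential {c : ℕ} (hc : 8 ≤ c) :
    2 + tilePotential c = tilePotential (2 * c) := by
  rw [tilePotential_of_le hc, tilePotential_of_le (by omega), mul_comm 2 c,
    Nat.log_mul_base one_lt_two (by omega)]
  ring

theorem tilePotential_lt_of_nonempty {c c' : ℕ} {A : Finset ℕ} (hc : 24 ≤ c)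
    (hA : A ⊆ {1, 3, 9, 11}) (hne : A.Nonempty) (hstep : c + ∑ l ∈ A, l = 2 * c') :
    2 + tilePotential c' < 5 * A.card + tilePotential c := by
  have hsum : ∑ l ∈ A, l ≤ 24 := Finset.sum_le_sum_of_subset hA
  have hlog : Nat.log 2 c' ≤ Nat.log 2 c := Nat.log_mono_right (by omega)
  have hcard : 0 < A.card := hne.card_pos
  rw [tilePotential_of_le (by omega : 8 ≤ c), tilePotential_of_le (by omega : 8 ≤ c')]
  omega

theorem tilePotential_le_of_lt : ∀ c < 24, ∀ A ∈ Finset.powerset {1, 3, 9, 11},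
    2 ∣ c + ∑ l ∈ A, l → 0 < c →
      2 + tilePotential ((c + ∑ l ∈ A, l) / 2) ≤ 5 * A.card + tilePotential c := by
  decide +kernel

theorem isPotential_tilePotential : IsPotential {1, 3, 9, 11} 5 2 tilePotential := by
  intro c c' hc A hA hstep
  rcases lt_or_ge c 24 with hlt | hge
  · simpa [hstep] using tilePotential_le_of_lt c hlt A (Finset.mem_powerset.2 hA) ⟨c', hstep⟩ hc
  rcases A.eq_empty_or_nonempty with rfl | hne
  · obtain rfl : c = 2 * c' := by simpa using hstep
    simpa using (two_add_tilePotential (by omega)).le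
  · exact (tilePotential_lt_of_nonempty hge hA hne hstep).le

/-- The tiles of the tight edge at a deficit which is `5` or a power of `2`. -/
def tightTiles (c : ℕ) : Finset ℕ :=
  if c = 1 then {9} else if c = 5 then {11} else ∅

theorem eq_tightTiles_of_lt : ∀ c ∈ ({1, 2, 4, 5, 8, 16} : Finset ℕ),
    ∀ A ∈ Finset.powerset {1, 3, 9, 11}, 2 ∣ c + ∑ l ∈ A, l →
      5 * A.card + tilePotential c = 2 + tilePotential ((c + ∑ l ∈ A, l) / 2) →
        A = tightTiles c := by
  decide +kernel

theorem eq_tightTiles {c c' : ℕ} {A : Finset ℕ} (hc : c ∈ insert 5 (Set.range (2 ^ · : ℕ → ℕ)))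
    (hA : A ⊆ {1, 3, 9, 11}) (hstep : c + ∑ l ∈ A, l = 2 * c')
    (htight : 5 * A.card + tilePotential c = 2 + tilePotential c') : A = tightTiles c := by
  rcases lt_or_ge c 24 with hlt | hge
  · refine eq_tightTiles_of_lt c ?_ A (Finset.mem_powerset.2 hA) ⟨c', hstep⟩ (by simpa [hstep])
    rcases hc with rfl | ⟨j, rfl⟩
    · decide
    · have hj : j < 5 := (Nat.pow_lt_pow_iff_right one_lt_two).1 (hlt.trans (by norm_num))
      interval_cases j <;> decide
  · rw [tightTiles, if_neg (by omega), if_neg (by omega)]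
    by_contra hne
    exact (tilePotential_lt_of_nonempty hge hA (Finset.nonempty_iff_ne_empty.2 hne) hstep).ne'
      htight

theorem isRigidOn_tilePotential :
    IsRigidOn {1, 3, 9, 11} 5 2 tilePotential (insert 5 (Set.range (2 ^ ·))) := by
  refine fun c hc => ⟨tightTiles c, fun A hA c' hstep htight => ?_⟩
  have hAc := eq_tightTiles hc hA hstep htight
  refine ⟨hAc, ?_⟩
  subst hAc
  rcases hc with rfl | ⟨_ | j, rfl⟩
  · have hsum : 5 + 11 = 2 * c' := by simpa [tightTiles] using hstep
    exact Or.inr ⟨3, show 2 ^ 3 = c' by omega⟩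
  · have hsum : 1 + 9 = 2 * c' := by simpa [tightTiles] using hstep
    exact Or.inl (by omega)
  · have hne : 2 ^ (j + 1) ≠ 5 := by omega
    have hsum : 2 ^ (j + 1) = 2 * c' := by simpa [tightTiles, hne] using hstep
    exact Or.inr ⟨j, show 2 ^ j = c' by omega⟩

/-- The tiling sequence `(j, 9), (j + 1, 11), (j + 5, 9), (j + 6, 11), …` with `2 * k` tiles. -/
def periodicTiling : ℕ → ℕ → List (ℕ × ℕ)
  | _, 0 => []
  | j, k + 1 => (j, 9) :: (j + 1, 11) :: periodicTiling (j + 5) k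

theorem length_periodicTiling (j k : ℕ) : (periodicTiling j k).length = 2 * k := by
  induction k generalizing j with
  | zero => rfl
  | succ k ih => simp only [periodicTiling, List.length_cons, ih]; ring

theorem isChain_periodicTiling (j k : ℕ) : (periodicTiling j k).IsChain TilingOrder := by
  induction k generalizing j with
  | zero => exact List.isChain_nil
  | succ k ih =>
    cases k with
    | zero => simp [periodicTiling, TilingOrder]
    | succ k => simpa [periodicTiling, TilingOrder] using ih (j + 5)

theorem isTiling_periodicTiling (j k : ℕ) :
    IsTiling {1, 3, 9, 11} (2 ^ j * (2 ^ (5 * k) - 1)) (periodicTiling j k) := by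
  induction k generalizing j with
  | zero => exact ⟨by simp [periodicTiling], isChain_periodicTiling j 0, by simp [periodicTiling]⟩
  | succ k ih =>
    obtain ⟨hmem, -, hsum⟩ := ih (j + 5)
    refine ⟨?_, isChain_periodicTiling j (k + 1), ?_⟩
    · simpa [periodicTiling] using hmem
    · have hpow : 0 < 2 ^ (5 * k) := by positivity
      simp only [periodicTiling, List.map_cons, List.sum_cons, hsum]
      zify [hpow, Nat.one_le_two_pow]
      ring

end PeriodicTiling

theorem stmt5_general (j k : ℕ) :
    stilde {1, 3, 9, 11} (2 ^ j * (2 ^ (5 * k) - 1)) = (2 * k : ℕ) ∧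
    Ktilde {1, 3, 9, 11} (2 ^ j * (2 ^ (5 * k) - 1)) = {periodicTiling j k} := by
  have hS : 0 ∉ ({1, 3, 9, 11} : Finset ℕ) := by decide
  have hdeficit : 2 ^ j + 2 ^ j * (2 ^ (5 * k) - 1) = 2 ^ (j + 5 * k) := by
    rw [← mul_one_add, Nat.add_sub_cancel' Nat.one_le_two_pow, pow_add]
  have hpos : 0 < 2 ^ j := Nat.two_pow_pos j
  have htiling := isTiling_periodicTiling j k
  have hstart := tilePotential_two_pow j
  have hend : tilePotential 1 = 0 := rfl
  have hmin : ∀ L, IsTiling {1, 3, 9, 11} (2 ^ j * (2 ^ (5 * k) - 1)) L →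
      (periodicTiling j k).length ≤ L.length := fun L hL => by
    have hbound := isPotential_tilePotential.gain_mul_add_le_length hS hpos hdeficit hL
    rw [length_periodicTiling]
    omega
  have hstilde := htiling.stilde_eq hmin
  refine ⟨hstilde.trans (by rw [length_periodicTiling]),
    htiling.Ktilde_eq_singleton hstilde fun L hL hlen => ?_⟩
  refine isPotential_tilePotential.eq_of_length_tight isRigidOn_tilePotential hS hpos
    (Or.inr ⟨j, rfl⟩) hdeficit hL htiling hlen ?_
  rw [length_periodicTiling]
  omega

theorem stmt5 :
    (2 ^ 17 - 4 : ℕ) =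
      11 * 2 ^ 13 + 9 * 2 ^ 12 + 11 * 2 ^ 8 + 9 * 2 ^ 7 + 11 * 2 ^ 3 + 9 * 2 ^ 2 ∧
    stilde {1, 3, 9, 11} (2 ^ 17 - 4) = 6 ∧
    Ktilde {1, 3, 9, 11} (2 ^ 17 - 4) =
      {[(2, 9), (3, 11), (7, 9), (8, 11), (12, 9), (13, 11)]} := by
  refine ⟨by norm_num, ?_⟩
  exact stmt5_general 2 3
end

section
/- Let S = {3,5,7,9,11,13,17}. For every integer k with 0 ≤ k ≤ 5, one has s̃(2^{21−3k}−8, S) = 6−k, and every (2^{21−3k}−8)-tiling sequence (b_1,ℓ_1),…,(b_{6−k},ℓ_{6−k}) with tiles in S of minimal length 6−k satisfies either (b_{6−k},ℓ_{6−k}) = (18−3k, 7), or both (b_{6−k},ℓ_{6−k}) = (17−3k, 13) and (b_{5−k},ℓ_{5−k}) = (15−3k, 11). -/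
open scoped BigOperators

/-!
The binary digit sum `s` is subadditive and `s (l * 2 ^ b) = s l`, so `ν` tiles of digit sum at
most `3` only reach numbers of digit sum at most `3 * ν`. The target consists of `3 * m`
consecutive binary ones, hence needs `m` tiles, and if `m` tiles suffice then each has digit sum `3`
and no carry occurs: translates of the patterns `111`, `1011`, `1101` of the tiles `7`, `11`, `13`
partition an interval. At its lowest free position, `7` fills three consecutive places, `11` leaves
a hole that only a `13` two places higher can fill, and `13` leaves a hole that no tile can fill.
So every minimal tiling is a concatenation of the blocks `7` and `11, 13`.
-/

section DigitSum

theorem binDigitSum_eq_mod_add_div (n : ℕ) : binDigitSum n = n % 2 + binDigitSum (n / 2) := by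
  rcases n.eq_zero_or_pos with rfl | hn
  · simp [binDigitSum]
  · simp [binDigitSum, Nat.digits_def' one_lt_two hn]

theorem binDigitSum_two_pow_mul (b n : ℕ) : binDigitSum (2 ^ b * n) = binDigitSum n := by
  rcases n.eq_zero_or_pos with rfl | hn
  · rw [mul_zero]
  · simp [binDigitSum, Nat.digits_base_pow_mul one_lt_two hn]

theorem binDigitSum_two_pow_sub_one (n : ℕ) : binDigitSum (2 ^ n - 1) = n := by
  induction n with
  | zero => simp [binDigitSum]
  | succ n ih =>
    have hpos : 0 < 2 ^ n := by positivity
    rw [binDigitSum_eq_mod_add_div, show (2 ^ (n + 1) - 1) / 2 = 2 ^ n - 1 by lia, ih]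
    lia

theorem binDigitSum_add_sum_div_two_pow {n N : ℕ} (h : n < 2 ^ N) :
    binDigitSum n + ∑ i ∈ Finset.range N, n / 2 ^ (i + 1) = n := by
  induction N generalizing n with
  | zero =>
    obtain rfl : n = 0 := by simpa using h
    simp [binDigitSum]
  | succ N ih =>
    have hhalf := ih (n := n / 2) (by lia)
    have hshift (i : ℕ) : n / 2 ^ (i + 1 + 1) = n / 2 / 2 ^ (i + 1) := by
      rw [Nat.div_div_eq_div_mul, ← pow_succ']
    rw [Finset.sum_range_succ', Finset.sum_congr rfl fun i _ => hshift i,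
      binDigitSum_eq_mod_add_div n, zero_add, pow_one]
    lia

theorem binDigitSum_add_le (a b : ℕ) : binDigitSum (a + b) ≤ binDigitSum a + binDigitSum b := by
  have hlt : a + b < 2 ^ (a + b) := Nat.lt_two_pow_self
  have ha := binDigitSum_add_sum_div_two_pow ((Nat.le_add_right a b).trans_lt hlt)
  have hb := binDigitSum_add_sum_div_two_pow ((Nat.le_add_left b a).trans_lt hlt)
  have hab := binDigitSum_add_sum_div_two_pow hlt
  have hle := Finset.sum_le_sum fun i (_ : i ∈ Finset.range (a + b)) =>
    Nat.div_add_div_le_add_div (x := a) (y := b) (z := 2 ^ (i + 1))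
  rw [Finset.sum_add_distrib] at hle
  lia

theorem add_div_two_pow_of_binDigitSum_add {a b : ℕ}
    (h : binDigitSum (a + b) = binDigitSum a + binDigitSum b) (j : ℕ) :
    (a + b) / 2 ^ j = a / 2 ^ j + b / 2 ^ j := by
  have hlt : a + b < 2 ^ (a + b + j) :=
    Nat.lt_two_pow_self.trans_le (pow_le_pow_right₀ one_le_two (Nat.le_add_right _ j))
  have ha := binDigitSum_add_sum_div_two_pow ((Nat.le_add_right a b).trans_lt hlt)
  have hb := binDigitSum_add_sum_div_two_pow ((Nat.le_add_left b a).trans_lt hlt)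
  have hab := binDigitSum_add_sum_div_two_pow hlt
  have hsum : ∑ i ∈ Finset.range (a + b + j), (a / 2 ^ (i + 1) + b / 2 ^ (i + 1)) =
      ∑ i ∈ Finset.range (a + b + j), (a + b) / 2 ^ (i + 1) := by
    rw [Finset.sum_add_distrib]
    lia
  -- Each summand is superadditive, so equality of the sums forces equality of the summands.
  rw [Finset.sum_eq_sum_iff_of_le fun _ _ => Nat.div_add_div_le_add_div] at hsum
  rcases j with _ | j
  · simp
  · exact (hsum j (Finset.mem_range.2 (by lia))).symm

theorem mod_two_pow_le_of_binDigitSum_add {a b : ℕ}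
    (h : binDigitSum (a + b) = binDigitSum a + binDigitSum b) (j : ℕ) :
    a % 2 ^ j ≤ (a + b) % 2 ^ j := by
  have hdiv := add_div_two_pow_of_binDigitSum_add h j
  have hmod := Nat.mod_add_div (a + b) (2 ^ j)
  rw [hdiv, mul_add] at hmod
  have ha := Nat.mod_add_div a (2 ^ j)
  have hb := Nat.mod_add_div b (2 ^ j)
  lia

theorem eq_of_two_pow_mul_odd_eq {b c x y : ℕ} (hx : Odd x) (hy : Odd y)
    (h : 2 ^ b * x = 2 ^ c * y) : b = c ∧ x = y := by
  have hbc : b = c := le_antisymm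
    ((Nat.pow_dvd_pow_iff_le_right one_lt_two).1 <|
      (Nat.Coprime.pow_left b hy.coprime_two_left).dvd_of_dvd_mul_right (h ▸ dvd_mul_right _ _))
    ((Nat.pow_dvd_pow_iff_le_right one_lt_two).1 <|
      (Nat.Coprime.pow_left c hx.coprime_two_left).dvd_of_dvd_mul_right (h ▸ dvd_mul_right _ _))
  subst hbc
  exact ⟨rfl, Nat.eq_of_mul_eq_mul_left (by positivity) h⟩

end DigitSum

section Tilings

variable {S : Finset ℕ} {d r b c l u : ℕ} {L : List (ℕ × ℕ)}

namespace IsTiling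

theorem exists_eq_two_pow_mul_add (h : IsTiling S r ((b, l) :: L)) :
    ∃ t, r = 2 ^ b * (l + t) ∧ IsTiling S (2 ^ b * t) L := by
  obtain ⟨hS, hchain, rfl⟩ := h
  have htrans : IsTrans (ℕ × ℕ) fun p q => p.1 ≤ q.1 := ⟨fun _ _ _ => le_trans⟩
  have hsorted : ((b, l) :: L).Pairwise fun p q => p.1 ≤ q.1 :=
    List.isChain_iff_pairwise.1 (List.IsChain.imp (fun _ _ h => h.1) hchain)
  have hdvd : 2 ^ b ∣ (L.map fun p => p.2 * 2 ^ p.1).sum := by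
    refine List.dvd_sum fun x hx => ?_
    obtain ⟨q, hq, rfl⟩ := List.mem_map.1 hx
    exact (pow_dvd_pow 2 (List.rel_of_pairwise_cons hsorted hq)).mul_left _
  obtain ⟨t, ht⟩ := hdvd
  refine ⟨t, ?_, (List.forall_mem_cons.1 hS).2, List.IsChain.tail hchain, ht⟩
  rw [List.map_cons, List.sum_cons, ht]
  ring

theorem binDigitSum_le (hS : ∀ l ∈ S, binDigitSum l ≤ d) (h : IsTiling S r L) :
    binDigitSum r ≤ d * L.length := by
  induction L generalizing r with
  | nil => simp [← h.2.2, binDigitSum]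
  | cons p L ih =>
    obtain ⟨t, rfl, hL⟩ := h.exists_eq_two_pow_mul_add
    have htail := ih hL
    have hhead := hS p.2 (h.1 p List.mem_cons_self)
    have hadd := binDigitSum_add_le p.2 t
    rw [binDigitSum_two_pow_mul] at htail ⊢
    rw [List.length_cons, mul_add_one]
    lia

end IsTiling

theorem isTiling_map_range_two_pow_sub_one (hd : 0 < d) (hS : 2 ^ d - 1 ∈ S) (c m : ℕ) :
    IsTiling S (2 ^ c * (2 ^ (d * m) - 1))
      ((List.range m).map fun i => (c + d * i, 2 ^ d - 1)) := by
  refine ⟨by simpa using fun _ _ => hS, ?_, ?_⟩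
  · refine (List.isChain_map _).2 ((List.isChain_range _ m).2 fun i _ => ?_)
    have hlt : c + d * i < c + d * (i + 1) := by gcongr; exact i.lt_succ_self
    exact ⟨hlt.le, fun h => absurd h hlt.ne⟩
  · induction m with
    | zero => simp
    | succ m ih =>
      rw [List.range_succ, List.map_append, List.map_append, List.sum_append, ih,
        List.map_singleton, List.map_singleton, List.sum_singleton]
      zify [Nat.one_le_two_pow]
      ring

theorem stilde_two_pow_mul_two_pow_sub_one (hd : 0 < d) (hS : ∀ l ∈ S, binDigitSum l ≤ d)
    (hmem : 2 ^ d - 1 ∈ S) (c m : ℕ) :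
    stilde S (2 ^ c * (2 ^ (d * m) - 1)) = m := by
  have htiling := isTiling_map_range_two_pow_sub_one hd hmem c m
  refine le_antisymm (sInf_le ⟨_, htiling, by simp⟩) (le_sInf ?_)
  rintro _ ⟨L, hL, rfl⟩
  have hle := hL.binDigitSum_le hS
  rw [binDigitSum_two_pow_mul, binDigitSum_two_pow_sub_one] at hle
  exact_mod_cast Nat.le_of_mul_le_mul_left hle hd

/-- A tiling whose sum `r` attains the digit sum bound `IsTiling.binDigitSum_le`. If the tiles in
`S` have digit sum at most `d`, those of a tight tiling have digit sum exactly `d` and add up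
without carries. -/
def IsTightTiling (S : Finset ℕ) (d r : ℕ) (L : List (ℕ × ℕ)) : Prop :=
  IsTiling S r L ∧ binDigitSum r = d * L.length

namespace IsTightTiling

theorem exists_cons_of_odd (hS : ∀ l ∈ S, binDigitSum l ≤ d)
    (hodd : ∀ l ∈ S, binDigitSum l = d → Odd l) (hu : Odd u)
    (h : IsTightTiling S d (2 ^ c * u) L) :
    ∃ l t L', L = (c, l) :: L' ∧ l ∈ S ∧ binDigitSum l = d ∧ u = l + t ∧
      IsTightTiling S d (2 ^ c * t) L' ∧ ∀ j, l % 2 ^ j ≤ u % 2 ^ j := by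
  obtain ⟨hL, htight⟩ := h
  rcases L with _ | ⟨⟨b, l⟩, L⟩
  · have hzero : 2 ^ c * u = 0 := hL.2.2.symm
    exact absurd hzero (mul_pos (by positivity) hu.pos).ne'
  have hl : l ∈ S := hL.1 _ List.mem_cons_self
  obtain ⟨t, hr, htail⟩ := hL.exists_eq_two_pow_mul_add
  have hhead_le := hS l hl
  have htail_le := htail.binDigitSum_le hS
  have hadd_le := binDigitSum_add_le l t
  rw [hr, List.length_cons, mul_add_one, binDigitSum_two_pow_mul] at htight
  rw [binDigitSum_two_pow_mul] at htail_le
  have hmod := mod_two_pow_le_of_binDigitSum_add (a := l) (b := t) (by lia)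
  have hl_odd : Odd l := hodd l hl (by lia)
  have hsum_odd : Odd (l + t) := by
    have hmod_two := hmod 1
    rw [Nat.odd_iff] at hl_odd ⊢
    lia
  obtain ⟨rfl, rfl⟩ := eq_of_two_pow_mul_odd_eq hu hsum_odd hr
  refine ⟨l, t, L, rfl, hl, by lia, rfl, ⟨htail, ?_⟩, hmod⟩
  rw [binDigitSum_two_pow_mul]
  lia

end IsTightTiling

end Tilings

/-- The shape of the minimal tilings of a run of binary ones starting at exponent `c`: the blocks
`7` (three ones) and `11, 13` (six ones, as `11 + 13 * 2 ^ 2 = 63`) stacked without gaps. -/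
inductive IsBlockTiling : ℕ → List (ℕ × ℕ) → Prop
  | nil (c : ℕ) : IsBlockTiling c []
  | seven {c : ℕ} {L : List (ℕ × ℕ)} (h : IsBlockTiling (c + 3) L) :
    IsBlockTiling c ((c, 7) :: L)
  | eleven_thirteen {c : ℕ} {L : List (ℕ × ℕ)} (h : IsBlockTiling (c + 6) L) :
    IsBlockTiling c ((c, 11) :: (c + 2, 13) :: L)

section Blocks

variable {S : Finset ℕ} {c m u : ℕ} {L : List (ℕ × ℕ)}

theorem IsTightTiling.exists_cons_of_three (hS : ∀ l ∈ S, binDigitSum l ≤ 3)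
    (hthree : ∀ l ∈ S, binDigitSum l = 3 → l = 7 ∨ l = 11 ∨ l = 13) (hu : Odd u)
    (h : IsTightTiling S 3 (2 ^ c * u) L) :
    ∃ l t L', L = (c, l) :: L' ∧ (l = 7 ∨ l = 11 ∨ l = 13) ∧ u = l + t ∧
      IsTightTiling S 3 (2 ^ c * t) L' ∧ ∀ j, l % 2 ^ j ≤ u % 2 ^ j := by
  have hodd (l : ℕ) (hl : l ∈ S) (hl3 : binDigitSum l = 3) : Odd l := by
    rcases hthree l hl hl3 with rfl | rfl | rfl <;> decide
  obtain ⟨l, t, L', hL, hl, hl3, hrest⟩ := h.exists_cons_of_odd hS hodd hu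
  exact ⟨l, t, L', hL, hthree l hl hl3, hrest⟩

theorem IsTightTiling.exists_cons_thirteen (hS : ∀ l ∈ S, binDigitSum l ≤ 3)
    (hthree : ∀ l ∈ S, binDigitSum l = 3 → l = 7 ∨ l = 11 ∨ l = 13) (hu : u % 4 = 1)
    (h : IsTightTiling S 3 (2 ^ c * u) L) :
    ∃ t L', L = (c, 13) :: L' ∧ u = 13 + t ∧ IsTightTiling S 3 (2 ^ c * t) L' := by
  obtain ⟨l, t, L', hL, hl, hsum, htail, hmod⟩ :=
    h.exists_cons_of_three hS hthree (Nat.odd_iff.2 (by lia))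
  -- Bit `1` of `u` is `0`, whereas `7` and `11` have a one there.
  have hmod_four := hmod 2
  rcases hl with rfl | rfl | rfl
  · lia
  · lia
  · exact ⟨t, L', hL, hsum, htail⟩

theorem not_isTightTiling_of_mod_eight_eq_one (hS : ∀ l ∈ S, binDigitSum l ≤ 3)
    (hthree : ∀ l ∈ S, binDigitSum l = 3 → l = 7 ∨ l = 11 ∨ l = 13) (hu : u % 8 = 1) :
    ¬ IsTightTiling S 3 (2 ^ c * u) L := by
  intro h
  obtain ⟨l, t, L', -, hl, -, -, hmod⟩ :=
    h.exists_cons_of_three hS hthree (Nat.odd_iff.2 (by lia))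
  -- Bits `1` and `2` of `u` are `0`, whereas each of `7`, `11`, `13` has a one in one of them.
  have hmod_eight := hmod 3
  rcases hl with rfl | rfl | rfl <;> lia

theorem IsTightTiling.isBlockTiling (hS : ∀ l ∈ S, binDigitSum l ≤ 3)
    (hthree : ∀ l ∈ S, binDigitSum l = 3 → l = 7 ∨ l = 11 ∨ l = 13)
    (h : IsTightTiling S 3 (2 ^ c * (2 ^ (3 * m) - 1)) L) : IsBlockTiling c L := by
  induction m using Nat.strong_induction_on generalizing c L with
  | _ m ih =>
    rcases m with _ | m
    · obtain rfl : L = [] := by simpa [binDigitSum] using h.2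
      exact .nil c
    have hpow (n : ℕ) : 2 ^ (3 * (n + 1)) = 8 * 2 ^ (3 * n) := by ring
    have hpos (n : ℕ) : 0 < 2 ^ (3 * n) := by positivity
    have hpos_m := hpos m
    rw [hpow] at h
    obtain ⟨l, t, L, rfl, rfl | hl, hsum, htail, -⟩ :=
      h.exists_cons_of_three hS hthree (Nat.odd_iff.2 (by lia))
    · obtain rfl : t = 2 ^ 3 * (2 ^ (3 * m) - 1) := by lia
      rw [← mul_assoc, ← pow_add] at htail
      exact .seven (ih m (by lia) htail)
    have hm : m ≠ 0 := by
      rintro rfl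
      lia
    obtain ⟨n, rfl⟩ := Nat.exists_eq_succ_of_ne_zero hm
    have hpos_n := hpos n
    rw [hpow] at hsum
    rcases hl with rfl | rfl
    · obtain rfl : t = 2 ^ 2 * (16 * 2 ^ (3 * n) - 3) := by lia
      rw [← mul_assoc, ← pow_add] at htail
      obtain ⟨t, L, rfl, hsum', htail'⟩ := htail.exists_cons_thirteen hS hthree (by lia)
      obtain rfl : t = 2 ^ 4 * (2 ^ (3 * n) - 1) := by lia
      rw [← mul_assoc, ← pow_add] at htail'
      exact .eleven_thirteen (ih n (by lia) htail')
    · obtain rfl : t = 2 ^ 1 * (32 * 2 ^ (3 * n) - 7) := by lia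
      rw [← mul_assoc, ← pow_add] at htail
      exact absurd htail (not_isTightTiling_of_mod_eight_eq_one hS hthree (by lia))

theorem IsBlockTiling.suffix_seven_or_eleven_thirteen (h : IsBlockTiling c L)
    (hm : L.length = m + 1) :
    [(c + 3 * m, 7)] <:+ L ∨
      ∃ n, m = n + 1 ∧ [(c + 3 * n, 11), (c + 3 * n + 2, 13)] <:+ L := by
  induction h generalizing m with
  | nil => simp at hm
  | @seven c L hL ih =>
    obtain rfl : L.length = m := by simpa using hm
    rcases hlen : L.length with _ | m
    · obtain rfl := List.length_eq_zero_iff.1 hlen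
      exact .inl (List.suffix_refl _)
    rw [show c + 3 * (m + 1) = c + 3 + 3 * m by ring]
    rcases ih hlen with hseven | ⟨n, rfl, hpair⟩
    · exact .inl (hseven.trans (List.suffix_cons _ _))
    · refine .inr ⟨n + 1, rfl, ?_⟩
      rw [show c + 3 * (n + 1) = c + 3 + 3 * n by ring]
      exact hpair.trans (List.suffix_cons _ _)
  | @eleven_thirteen c L hL ih =>
    obtain rfl : L.length + 1 = m := by simpa using hm
    rcases hlen : L.length with _ | m
    · obtain rfl := List.length_eq_zero_iff.1 hlen
      exact .inr ⟨0, rfl, List.suffix_refl _⟩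
    have hsuffix : L <:+ (c, 11) :: (c + 2, 13) :: L := List.suffix_append [_, _] L
    rw [show c + 3 * (m + 1 + 1) = c + 6 + 3 * m by ring]
    rcases ih hlen with hseven | ⟨n, rfl, hpair⟩
    · exact .inl (hseven.trans hsuffix)
    · refine .inr ⟨n + 2, rfl, ?_⟩
      rw [show c + 3 * (n + 2) = c + 6 + 3 * n by ring]
      exact hpair.trans hsuffix

end Blocks

/-- For `m = 0` the truncated `m - 1` is harmless: the second alternative would put both `13` and
`11` at index `0`. -/
theorem stmt9_general {S : Finset ℕ} (hS : ∀ l ∈ S, binDigitSum l ≤ 3)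
    (hthree : ∀ l ∈ S, binDigitSum l = 3 → l = 7 ∨ l = 11 ∨ l = 13) (h7 : 7 ∈ S) (c m : ℕ) :
    stilde S (2 ^ (c + 3 * (m + 1)) - 2 ^ c) = ((m + 1 : ℕ) : ℕ∞) ∧
    ∀ L : List (ℕ × ℕ), IsTiling S (2 ^ (c + 3 * (m + 1)) - 2 ^ c) L → L.length = m + 1 →
      L[m]? = some (c + 3 * m, 7) ∨
      (L[m]? = some (c + 3 * m - 1, 13) ∧ L[m - 1]? = some (c + 3 * m - 3, 11)) := by
  rw [show 2 ^ (c + 3 * (m + 1)) - 2 ^ c = 2 ^ c * (2 ^ (3 * (m + 1)) - 1) by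
    rw [Nat.mul_sub_one, pow_add]]
  refine ⟨stilde_two_pow_mul_two_pow_sub_one three_pos hS h7 c (m + 1), fun L hL hlen => ?_⟩
  have htight : IsTightTiling S 3 (2 ^ c * (2 ^ (3 * (m + 1)) - 1)) L :=
    ⟨hL, by rw [binDigitSum_two_pow_mul, binDigitSum_two_pow_sub_one, hlen]⟩
  have hblocks := htight.isBlockTiling hS hthree
  rcases hblocks.suffix_seven_or_eleven_thirteen hlen with ⟨P, rfl⟩ | ⟨n, rfl, P, rfl⟩
  · obtain rfl : P.length = m := by simpa using hlen
    exact .inl (by simp)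
  · obtain rfl : P.length = n := by simpa using hlen
    rw [show c + 3 * (P.length + 1) - 1 = c + 3 * P.length + 2 by lia,
      show c + 3 * (P.length + 1) - 3 = c + 3 * P.length by lia]
    exact .inr (by simp)

theorem stmt9 (k : ℕ) (hk : k ≤ 5) :
    stilde {3, 5, 7, 9, 11, 13, 17} (2 ^ (21 - 3 * k) - 8) = ((6 - k : ℕ) : ℕ∞) ∧
    ∀ L : List (ℕ × ℕ),
      IsTiling {3, 5, 7, 9, 11, 13, 17} (2 ^ (21 - 3 * k) - 8) L →
      L.length = 6 - k →
        L[5 - k]? = some (18 - 3 * k, 7) ∨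
        (L[5 - k]? = some (17 - 3 * k, 13) ∧ L[4 - k]? = some (15 - 3 * k, 11)) := by
  have general := stmt9_general (S := {3, 5, 7, 9, 11, 13, 17}) (by decide +kernel)
    (by decide +kernel) (by decide) 3 (5 - k)
  interval_cases k <;> exact general
end
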